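/- Let p be a prime and let G be a torsion-free abelian group. Let S denote the set of subgroups H of G whose index in G is a power of p, and let K denote the inverse limit of the quotients G/H over H ∈ S, realized concretely as K = {x ∈ Π_{H ∈ S} G/H : for all H, H' ∈ S with H ⊆ H', the natural map G/H → G/H' sends x_H to x_{H'}}, equipped with the subspace topology from the product of the discrete groups G/H. Then there exists an additive group isomorphism η from K to the double dual Hom(Hom(G, ℤ_p), ℤ_p), equipped with the relative topology, such that η is a homeomorphism and η((g + H)_{H ∈ S}) = ĝ for every g ∈ G, where ĝ denotes the evaluation map f ↦ f(g). In other words, the pro-p completion of G is isomorphic, as a topological group and compatibly with the canonical maps from G, to the p-adic double dual of G. -/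

import Mathlib

/-!
The double dual of `G` and its pro-`p` completion are both compact Hausdorff groups in which `G`
has dense image, so it suffices that they induce the same topology on `G`: both are then the
completion of `G` for that topology.

The double dual induces the topology with the subgroups `{g | p ^ n ∣ f g}` as a subbasis at `0`,
and these have `p`-power index. Conversely, let `p ^ n` kill `G ⧸ H` and let `x ∉ H`. Some character
`χ` of `G ⧸ H` with values in `ℚ/ℤ` has `χ x ≠ 0`. As multiplication by `p` is injective on `G` and
`ℚ/ℤ` is divisible, `χ` can be divided by `p` again and again among the characters of `G`. Since
`ℤ_p` is the Tate module of `ℚ/ℤ`, these successive quotients assemble to a functional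
`f : G → ℤ_p` with `χ = f / p ^ n`, so that `f` is divisible by `p ^ n` on `H` but not at `x`. As
`G ⧸ H` is finite, the conditions `p ^ n ∣ f g` for finitely many such `f` force `g ∈ H`.

The same separation property, applied to the free module `ℤ_p ^ I`, shows that `G` is dense in the
double dual.
-/

open Filter Topology

section CompletionComparison

theorem exists_continuousAddEquiv_of_comap_nhds_zero_eq {G A B : Type*} [AddGroup G]
    [AddGroup A] [UniformSpace A] [IsUniformAddGroup A] [CompleteSpace A] [T0Space A]
    [AddGroup B] [UniformSpace B] [IsUniformAddGroup B] [CompleteSpace B] [T0Space B]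
    (i : G →+ A) (j : G →+ B) (hi : DenseRange i) (hj : DenseRange j)
    (hij : comap i (𝓝 0) = comap j (𝓝 0)) :
    ∃ e : A ≃ₜ+ B, ∀ g, e (i g) = j g := by
  let uniformSpaceG : UniformSpace G := UniformSpace.comap i inferInstance
  have hj_unif : IsUniformInducing j := ⟨by
    have h := congrArg (comap fun x : G × G => x.2 - x.1) hij.symm
    simpa only [uniformSpaceG, uniformity_comap, uniformity_eq_comap_nhds_zero, comap_comap,
      Function.comp_def, Prod.map_fst, Prod.map_snd, map_sub] using h⟩
  let cA : AbstractCompletion G := ⟨A, i, ‹_›, ‹_›, ‹_›, ⟨rfl⟩, hi⟩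
  let cB : AbstractCompletion G := ⟨B, j, ‹_›, ‹_›, ‹_›, hj_unif, hj⟩
  let e : A ≃ᵤ B := cA.compareEquiv cB
  have he : ∀ g, e (i g) = j g := cA.compare_coe cB
  have he_cont : Continuous e := e.continuous
  have he_add : ∀ x y, e (x + y) = e x + e y := fun x y =>
    hi.induction_on₂ (isClosed_eq (by fun_prop) (by fun_prop))
      (fun g h => by rw [← map_add, he, he, he, map_add]) x y
  exact ⟨{ e.toHomeomorph with map_add' := he_add }, he⟩

theorem denseRange_of_isInducing_pi {ι α A : Type*} {X : ι → Type*} [∀ i, TopologicalSpace (X i)]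
    [TopologicalSpace A] {ρ : A → ∀ i, X i} (hρ : IsInducing ρ) {j : α → A}
    (h : ∀ (a : A) (I : Finset ι) (u : ∀ i, Set (X i)), (∀ i, u i ∈ 𝓝 (ρ a i)) →
      ∃ x, ∀ i ∈ I, ρ (j x) i ∈ u i) : DenseRange j := by
  refine fun a => mem_closure_iff_nhds.2 fun s hs => ?_
  rw [hρ.nhds_eq_comap, nhds_pi, mem_comap] at hs
  obtain ⟨t, ht, hts⟩ := hs
  obtain ⟨I, u, hu, hut⟩ := mem_pi'.1 ht
  obtain ⟨x, hx⟩ := h a I u hu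
  exact ⟨j x, hts (hut hx), x, rfl⟩

end CompletionComparison

section PadicIntegers

variable {p : ℕ} [Fact p.Prime]

theorem norm_padicInt_le_iff_pow_dvd (z : ℤ_[p]) (n : ℕ) :
    ‖z‖ ≤ (p : ℝ) ^ (-n : ℤ) ↔ (p : ℤ_[p]) ^ n ∣ z := by
  rw [PadicInt.norm_le_pow_iff_mem_span_pow, Ideal.mem_span_singleton]

theorem toZModPow_eq_zero_iff (n : ℕ) (z : ℤ_[p]) :
    PadicInt.toZModPow n z = 0 ↔ (p : ℤ_[p]) ^ n ∣ z := by
  rw [← RingHom.mem_ker, PadicInt.ker_toZModPow, Ideal.mem_span_singleton]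

theorem padicInt_eq_of_forall_pow_dvd_sub {z w : ℤ_[p]} (h : ∀ n : ℕ, (p : ℤ_[p]) ^ n ∣ z - w) :
    z = w :=
  PadicInt.ext_of_toZModPow.1 fun n => by
    rw [← sub_eq_zero, ← map_sub, toZModPow_eq_zero_iff]
    exact h n

theorem nhds_padicInt_hasBasis (z : ℤ_[p]) :
    (𝓝 z).HasBasis (fun _ : ℕ => True) fun n => {w | (p : ℤ_[p]) ^ n ∣ w - z} := by
  refine (Metric.nhds_basis_closedBall.to_hasBasis (fun ε hε => ?_) fun n _ => ?_)
  · obtain ⟨n, hn⟩ := PadicInt.exists_pow_neg_lt p hε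
    refine ⟨n, trivial, fun w hw => ?_⟩
    rw [mem_closedBall_iff_norm]
    exact ((norm_padicInt_le_iff_pow_dvd _ n).2 hw).trans hn.le
  · refine ⟨(p : ℝ) ^ (-n : ℤ), zpow_pos (mod_cast (Fact.out : p.Prime).pos) _, fun w hw => ?_⟩
    rw [mem_closedBall_iff_norm] at hw
    exact (norm_padicInt_le_iff_pow_dvd _ n).1 hw

theorem map_padicInt_smul {M : Type*} [AddCommGroup M] [Module ℤ_[p] M] (f : M →+ ℤ_[p])
    (z : ℤ_[p]) (x : M) : f (z • x) = z * f x := by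
  refine padicInt_eq_of_forall_pow_dvd_sub fun n => ?_
  obtain ⟨w, hw⟩ := Ideal.mem_span_singleton.1 (PadicInt.appr_spec n z)
  have hz : z • x = z.appr n • x + p ^ n • w • x := by
    rw [← Nat.cast_smul_eq_nsmul ℤ_[p], ← Nat.cast_smul_eq_nsmul ℤ_[p], smul_smul, ← add_smul,
      Nat.cast_pow, ← hw, add_sub_cancel]
  refine ⟨f (w • x) - w * f x, ?_⟩
  rw [hz, map_add, map_nsmul, map_nsmul, nsmul_eq_mul, nsmul_eq_mul, Nat.cast_pow]
  linear_combination (-f x) * hw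

end PadicIntegers

section DivPow

variable {p : ℕ} [Fact p.Prime]

variable (p) in
/-- The map `z ↦ z / p ^ k` from `ℤ_p` to `ℚ/ℤ`. Over all `k` these maps identify `ℤ_p` with the
Tate module of `ℚ/ℤ`, which is how functionals are built from characters. It is encoded as reduction
modulo `p ^ k` followed by the embedding of `ZMod (p ^ k)` sending `1` to `1 / p ^ k`. -/
noncomputable def padicDivPow (k : ℕ) : ℤ_[p] →+ AddCircle (1 : ℚ) :=
  (ZMod.lift (p ^ k) ⟨zmultiplesHom _ ((((p : ℚ) ^ k)⁻¹ : ℚ) : AddCircle (1 : ℚ)), by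
    have hp : (p : ℚ) ^ k ≠ 0 := pow_ne_zero k (mod_cast (Fact.out : p.Prime).ne_zero)
    rw [zmultiplesHom_apply, natCast_zsmul, ← AddCircle.coe_nsmul, nsmul_eq_mul, Nat.cast_pow,
      mul_inv_cancel₀ hp, AddCircle.coe_period]⟩).comp (PadicInt.toZModPow k).toAddMonoidHom

theorem padicDivPow_intCast (k : ℕ) (a : ℤ) :
    padicDivPow p k a = ((a / (p : ℚ) ^ k : ℚ) : AddCircle (1 : ℚ)) := by
  simp [padicDivPow, div_eq_mul_inv, ← zsmul_eq_mul]

theorem padicDivPow_eq_zero_iff (k : ℕ) (z : ℤ_[p]) :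
    padicDivPow p k z = 0 ↔ (p : ℤ_[p]) ^ k ∣ z := by
  have hp : (p : ℚ) ^ k ≠ 0 := pow_ne_zero k (mod_cast (Fact.out : p.Prime).ne_zero)
  rw [← toZModPow_eq_zero_iff, padicDivPow, AddMonoidHom.comp_apply]
  refine map_eq_zero_iff (ZMod.lift (p ^ k) _) ((ZMod.lift_injective (p ^ k)).2 fun a ha => ?_)
  rw [zmultiplesHom_apply, ← AddCircle.coe_zsmul, AddCircle.coe_eq_zero_iff] at ha
  obtain ⟨m, hm⟩ := ha
  rw [ZMod.intCast_zmod_eq_zero_iff_dvd]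
  refine ⟨m, ?_⟩
  rw [zsmul_eq_mul, zsmul_eq_mul, mul_one, eq_mul_inv_iff_mul_eq₀ hp] at hm
  rw [mul_comm]
  exact_mod_cast hm.symm

theorem padicDivPow_eq_iff (k : ℕ) (z w : ℤ_[p]) :
    padicDivPow p k z = padicDivPow p k w ↔ (p : ℤ_[p]) ^ k ∣ z - w := by
  rw [← sub_eq_zero, ← map_sub, padicDivPow_eq_zero_iff]

theorem nsmul_padicDivPow_succ (k : ℕ) (z : ℤ_[p]) :
    p • padicDivPow p (k + 1) z = padicDivPow p k z := by
  have hp : (p : ℚ) ≠ 0 := mod_cast (Fact.out : p.Prime).ne_zero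
  obtain ⟨a, ha⟩ : ∃ a : ℤ, (p : ℤ_[p]) ^ (k + 1) ∣ z - a :=
    ⟨z.appr (k + 1), by
      rw [Int.cast_natCast]
      exact Ideal.mem_span_singleton.1 (PadicInt.appr_spec (k + 1) z)⟩
  have h_succ := (padicDivPow_eq_iff (k + 1) z a).2 ha
  have h_k := (padicDivPow_eq_iff k z a).2 ((pow_dvd_pow _ k.le_succ).trans ha)
  have h_div : p • ((a : ℚ) / (p : ℚ) ^ (k + 1)) = a / (p : ℚ) ^ k := by
    rw [nsmul_eq_mul, pow_succ', ← mul_div_assoc, mul_div_mul_left _ _ hp]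
  rw [h_succ, h_k, padicDivPow_intCast, padicDivPow_intCast, ← AddCircle.coe_nsmul, h_div]

theorem exists_padicDivPow_eq_of_pow_nsmul_eq_zero {k : ℕ} {c : AddCircle (1 : ℚ)}
    (hc : p ^ k • c = 0) : ∃ a : ℤ, padicDivPow p k a = c := by
  have hp : 0 < p ^ k := pow_pos (Fact.out : p.Prime).pos k
  obtain ⟨m, -, hm⟩ := (AddCircle.nsmul_eq_zero_iff hp).1 hc
  refine ⟨m, ?_⟩
  rw [padicDivPow_intCast, ← hm]
  push_cast
  rw [mul_one]

theorem exists_forall_padicDivPow_eq {c : ℕ → AddCircle (1 : ℚ)} (h_zero : c 0 = 0)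
    (h_succ : ∀ k, p • c (k + 1) = c k) : ∃ z : ℤ_[p], ∀ k, padicDivPow p k z = c k := by
  have h_torsion : ∀ k, p ^ k • c k = 0 := fun k => by
    induction k with
    | zero => rw [h_zero, smul_zero]
    | succ k ih => rw [pow_succ, mul_smul, h_succ, ih]
  choose a ha using fun k => exists_padicDivPow_eq_of_pow_nsmul_eq_zero (h_torsion k)
  have h_dvd : ∀ k, (p : ℤ) ^ k ∣ a (k + 1) - a k := fun k => by
    rw [← PadicInt.pow_p_dvd_int_iff, Int.cast_sub, ← padicDivPow_eq_iff,
      ← nsmul_padicDivPow_succ, ha, ha, h_succ]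
  refine ⟨PadicInt.ofIntSeq _ (PadicInt.isCauSeq_padicNorm_of_pow_dvd_sub a p h_dvd), fun k => ?_⟩
  rw [← ha k, padicDivPow_eq_iff, ← toZModPow_eq_zero_iff, map_sub,
    PadicInt.toZModPow_ofIntSeq_of_pow_dvd_sub a p h_dvd, map_intCast, sub_self]

end DivPow

section Lifting

variable {p : ℕ} {G : Type*} [AddCommGroup G]

theorem exists_nsmul_eq_of_isSMulRegular {n : ℕ} (hG : IsSMulRegular G n)
    (χ : G →+ AddCircle (1 : ℚ)) : ∃ ψ : G →+ AddCircle (1 : ℚ), n • ψ = χ := by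
  obtain ⟨ψ, hψ⟩ := (Module.Baer.of_divisible
    (AddCircle (1 : ℚ))).extension_property_addMonoidHom (nsmulAddMonoidHom (α := G) n) hG χ
  refine ⟨ψ, ?_⟩
  ext g
  rw [← hψ, AddMonoidHom.smul_apply, ← map_nsmul]
  rfl

theorem exists_padicDivPow_comp_eq [Fact p.Prime] (hG : IsSMulRegular G p) (n : ℕ)
    (χ : G →+ AddCircle (1 : ℚ)) (hχ : p ^ n • χ = 0) :
    ∃ f : G →+ ℤ_[p], ∀ g, padicDivPow p n (f g) = χ g := by
  choose div h_div using exists_nsmul_eq_of_isSMulRegular hG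
  let ψ : ℕ → G →+ AddCircle (1 : ℚ) := fun k => p ^ n • div^[k] χ
  have hψ_succ : ∀ k, p • ψ (k + 1) = ψ k := fun k => by
    simp only [ψ, Function.iterate_succ_apply', smul_comm p (p ^ n), h_div]
  have h_iter_div : ∀ k, p ^ k • div^[k] χ = χ := fun k => by
    induction k with
    | zero => rw [pow_zero, one_smul, Function.iterate_zero_apply]
    | succ k ih => rw [Function.iterate_succ_apply', pow_succ, mul_smul, h_div, ih]
  choose f hf using fun g => exists_forall_padicDivPow_eq (c := fun k => ψ k g)
    (by simp only [ψ, Function.iterate_zero_apply, hχ, AddMonoidHom.zero_apply])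
    fun k => by rw [← AddMonoidHom.smul_apply, hψ_succ]
  refine ⟨AddMonoidHom.mk' f fun g h => padicInt_eq_of_forall_pow_dvd_sub fun k => ?_, fun g => ?_⟩
  · rw [← padicDivPow_eq_iff, map_add, hf, hf, hf, map_add]
  · rw [AddMonoidHom.mk'_apply, hf]
    exact DFunLike.congr_fun (h_iter_div n) g

theorem exists_character_eq_zero_of_notMem {H : AddSubgroup G} {x : G} (hx : x ∉ H) :
    ∃ χ : G →+ AddCircle (1 : ℚ), (∀ h ∈ H, χ h = 0) ∧ χ x ≠ 0 := by
  obtain ⟨c, hc⟩ := CharacterModule.exists_character_apply_ne_zero_of_ne_zero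
    (mt (QuotientAddGroup.eq_zero_iff x).1 hx)
  refine ⟨AddMonoidHom.comp c (QuotientAddGroup.mk' H), fun h hh => ?_, hc⟩
  change c (h : G ⧸ H) = 0
  rw [(QuotientAddGroup.eq_zero_iff h).2 hh, map_zero]

theorem exists_pow_dvd_and_not_pow_dvd_of_notMem [Fact p.Prime] (hG : IsSMulRegular G p)
    {H : AddSubgroup G} {n : ℕ} (hH : ∀ g : G, p ^ n • g ∈ H) {x : G} (hx : x ∉ H) :
    ∃ f : G →+ ℤ_[p], (∀ h ∈ H, (p : ℤ_[p]) ^ n ∣ f h) ∧ ¬ (p : ℤ_[p]) ^ n ∣ f x := by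
  obtain ⟨χ, hχH, hχx⟩ := exists_character_eq_zero_of_notMem hx
  have hχ : p ^ n • χ = 0 := AddMonoidHom.ext fun g => by
    rw [AddMonoidHom.smul_apply, ← map_nsmul, hχH _ (hH g), AddMonoidHom.zero_apply]
  obtain ⟨f, hf⟩ := exists_padicDivPow_comp_eq hG n χ hχ
  refine ⟨f, fun h hh => ?_, ?_⟩
  · rw [← padicDivPow_eq_zero_iff, hf, hχH h hh]
  · rwa [← padicDivPow_eq_zero_iff, hf]

end Lifting

section DoubleDual

variable {p : ℕ} [Fact p.Prime] {G : Type*} [AddCommGroup G]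

theorem exists_eq_nsmul_of_forall_pow_dvd {n : ℕ} {f : G →+ ℤ_[p]}
    (hf : ∀ g, (p : ℤ_[p]) ^ n ∣ f g) : ∃ f' : G →+ ℤ_[p], f = p ^ n • f' := by
  have hp : (p : ℤ_[p]) ^ n ≠ 0 := pow_ne_zero n (mod_cast (Fact.out : p.Prime).ne_zero)
  choose f' hf' using hf
  refine ⟨AddMonoidHom.mk' f' fun g h => mul_left_cancel₀ hp ?_, ?_⟩
  · rw [mul_add, ← hf', ← hf', ← hf', map_add]
  · ext g
    simp [hf']

theorem map_eq_sum_mul_map_single {ι : Type*} [Fintype ι] [DecidableEq ι]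
    (F : (ι → ℤ_[p]) →+ ℤ_[p]) (v : ι → ℤ_[p]) : F v = ∑ i, v i * F (Pi.single i 1) := by
  conv_lhs => rw [← Finset.univ_sum_single v, map_sum]
  refine Finset.sum_congr rfl fun i _ => ?_
  rw [← map_padicInt_smul, ← Pi.single_smul, smul_eq_mul, mul_one]

theorem exists_forall_pow_dvd_sub_apply (Φ : (G →+ ℤ_[p]) →+ ℤ_[p]) (I : Finset (G →+ ℤ_[p]))
    (n : ℕ) : ∃ g : G, ∀ f ∈ I, (p : ℤ_[p]) ^ n ∣ f g - Φ f := by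
  classical
  let ev : G →+ I → ℤ_[p] := AddMonoidHom.pi fun f => f.1
  let A : AddSubgroup (I → ℤ_[p]) := ev.range ⊔ (nsmulAddMonoidHom (p ^ n)).range
  suffices hΦ : (fun f : I => Φ f) ∈ A by
    obtain ⟨-, ⟨g, rfl⟩, -, ⟨v, rfl⟩, hgv⟩ := AddSubgroup.mem_sup.1 hΦ
    refine ⟨g, fun f hf => ⟨-v ⟨f, hf⟩, ?_⟩⟩
    have hf_eq : f g + (p : ℤ_[p]) ^ n * v ⟨f, hf⟩ = Φ f := by
      simpa [ev] using congrFun hgv ⟨f, hf⟩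
    linear_combination hf_eq
  by_contra hΦ
  have hreg : IsSMulRegular (I → ℤ_[p]) p :=
    nsmul_right_injective (Fact.out : p.Prime).ne_zero
  obtain ⟨F, hFA, hFΦ⟩ := exists_pow_dvd_and_not_pow_dvd_of_notMem hreg (H := A) (n := n)
    (fun v => AddSubgroup.mem_sup_right ⟨v, rfl⟩) hΦ
  -- The combination `T` of the elements of `I` with the coefficients of `F` is divisible by `p ^ n`
  -- on `G`, hence so is `Φ T`, which is the value of `F` at `(Φ f)_f`.
  let T : G →+ ℤ_[p] := ∑ f : I, F (Pi.single f 1) • f.1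
  have hT : ∀ g, T g = F (ev g) := fun g => by
    rw [map_eq_sum_mul_map_single F (ev g)]
    simp [T, ev, mul_comm]
  have hΦT : Φ T = F (fun f => Φ f) := by
    rw [map_eq_sum_mul_map_single F fun f : I => Φ f]
    simp only [T, map_sum, map_padicInt_smul, mul_comm]
  obtain ⟨T', hT'⟩ := exists_eq_nsmul_of_forall_pow_dvd (f := T) (n := n) fun g =>
    hT g ▸ hFA _ (AddSubgroup.mem_sup_left ⟨g, rfl⟩)
  refine hFΦ ⟨Φ T', ?_⟩
  rw [← hΦT, hT', map_nsmul, nsmul_eq_mul, Nat.cast_pow]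

/-- The topology of pointwise convergence on additive homomorphisms, used on the double dual. -/
abbrev pointwiseTopology (A M : Type*) [AddZeroClass A] [AddZeroClass M] [TopologicalSpace M] :
    TopologicalSpace (A →+ M) :=
  TopologicalSpace.induced (fun Φ => (Φ : A → M)) inferInstance

attribute [local instance] pointwiseTopology

theorem compactSpace_addMonoidHom (A M : Type*) [AddZeroClass A] [AddZeroClass M]
    [TopologicalSpace M] [ContinuousAdd M] [T2Space M] [CompactSpace M] : CompactSpace (A →+ M) :=
  IsClosedEmbedding.compactSpace (f := ((⇑) : (A →+ M) → A → M))
    ⟨⟨⟨rfl⟩, DFunLike.coe_injective⟩, AddMonoidHom.isClosed_range_coe A M⟩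

theorem t2Space_addMonoidHom (A M : Type*) [AddZeroClass A] [AddZeroClass M]
    [TopologicalSpace M] [T2Space M] : T2Space (A →+ M) :=
  T2Space.of_injective_continuous DFunLike.coe_injective continuous_induced_dom

theorem isTopologicalAddGroup_addMonoidHom (A M : Type*) [AddZeroClass A] [AddCommGroup M]
    [TopologicalSpace M] [IsTopologicalAddGroup M] : IsTopologicalAddGroup (A →+ M) :=
  topologicalAddGroup_induced (AddMonoidHom.coeFn A M)

theorem denseRange_eval : DenseRange (AddMonoidHom.eval : G →+ (G →+ ℤ_[p]) →+ ℤ_[p]) := by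
  refine denseRange_of_isInducing_pi
    (ρ := fun (Φ : (G →+ ℤ_[p]) →+ ℤ_[p]) f => Φ f) ⟨rfl⟩ fun Φ I u hu => ?_
  choose N hN using fun f => ((nhds_padicInt_hasBasis (Φ f)).mem_iff.1 (hu f))
  obtain ⟨g, hg⟩ := exists_forall_pow_dvd_sub_apply Φ I (I.sup N)
  exact ⟨g, fun f hf => (hN f).2 ((pow_dvd_pow _ (Finset.le_sup hf)).trans (hg f hf))⟩

theorem comap_eval_nhds_zero :
    comap (AddMonoidHom.eval : G →+ (G →+ ℤ_[p]) →+ ℤ_[p]) (𝓝 0) =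
      ⨅ (f : G →+ ℤ_[p]) (n : ℕ), 𝓟 {g | (p : ℤ_[p]) ^ n ∣ f g} := by
  rw [nhds_induced, comap_comap, nhds_pi, Filter.pi, comap_iInf]
  refine iInf_congr fun f => ?_
  rw [comap_comap]
  refine (((nhds_padicInt_hasBasis 0).comap _).eq_iInf).trans ?_
  simp

end DoubleDual

section ProPCompletion

/-- The index set of the inverse system: the subgroups of `G` of `p`-power index. The index is
finite when `p ≠ 0`, because `Nat.card` is `0` on infinite types. -/
abbrev PPowerIndexSubgroup (p : ℕ) (G : Type*) [AddCommGroup G] :=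
  {H : AddSubgroup G // ∃ k : ℕ, Nat.card (G ⧸ H) = p ^ k}

/-- The pro-`p` completion of `G`, encoded as the subgroup of compatible families in the product of
the quotients of `G` by its subgroups of `p`-power index. -/
def proPCompletion (p : ℕ) (G : Type*) [AddCommGroup G] :
    AddSubgroup (∀ H : PPowerIndexSubgroup p G, G ⧸ H.1) where
  carrier := {x | ∀ (H H' : PPowerIndexSubgroup p G) (hle : H.1 ≤ H'.1),
    QuotientAddGroup.map H.1 H'.1 (AddMonoidHom.id G) (fun _ hg => hle hg) (x H) = x H'}
  zero_mem' H H' hle := map_zero _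
  add_mem' hx hy H H' hle := by
    rw [Pi.add_apply, Pi.add_apply, map_add, hx H H' hle, hy H H' hle]
  neg_mem' hx H H' hle := by
    rw [Pi.neg_apply, Pi.neg_apply, map_neg, hx H H' hle]

/-- The canonical map from `G` to its pro-`p` completion, `g ↦ (g + H)_H`. -/
def toProPCompletion (p : ℕ) (G : Type*) [AddCommGroup G] : G →+ proPCompletion p G :=
  AddMonoidHom.codRestrict (AddMonoidHom.pi fun H => QuotientAddGroup.mk' H.1) _
    fun _ _ _ _ => rfl

/-- The discrete topology on the quotients of the inverse system. -/
abbrev quotientDiscreteTopology (p : ℕ) (G : Type*) [AddCommGroup G]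
    (H : PPowerIndexSubgroup p G) : TopologicalSpace (G ⧸ H.1) := ⊥

attribute [local instance] quotientDiscreteTopology pointwiseTopology

variable {p : ℕ} {G : Type*} [AddCommGroup G]

theorem discreteTopology_quotient (H : PPowerIndexSubgroup p G) : DiscreteTopology (G ⧸ H.1) :=
  ⟨rfl⟩

attribute [local instance] discreteTopology_quotient

theorem isClosed_proPCompletion :
    IsClosed (proPCompletion p G : Set (∀ H : PPowerIndexSubgroup p G, G ⧸ H.1)) := by
  have h_eq : (proPCompletion p G : Set (∀ H : PPowerIndexSubgroup p G, G ⧸ H.1)) =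
      ⋂ (H : PPowerIndexSubgroup p G) (H' : PPowerIndexSubgroup p G) (hle : H.1 ≤ H'.1),
        {x | QuotientAddGroup.map H.1 H'.1 (AddMonoidHom.id G) (fun _ hg => hle hg) (x H) =
          x H'} := by
    ext x
    simp only [Set.mem_iInter]
    rfl
  rw [h_eq]
  exact isClosed_iInter fun H => isClosed_iInter fun H' => isClosed_iInter fun _ =>
    isClosed_eq (continuous_of_discreteTopology.comp (continuous_apply H)) (continuous_apply H')

theorem comap_toProPCompletion_nhds_zero :
    comap (toProPCompletion p G) (𝓝 0) = ⨅ H : PPowerIndexSubgroup p G, 𝓟 (H.1 : Set G) := by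
  rw [nhds_induced, comap_comap, nhds_pi, Filter.pi, comap_iInf]
  refine iInf_congr fun H => ?_
  rw [comap_comap, nhds_discrete, comap_pure]
  congr 1
  ext g
  exact QuotientAddGroup.eq_zero_iff g

variable [Fact p.Prime]

theorem finite_quotient (H : PPowerIndexSubgroup p G) : Finite (G ⧸ H.1) := by
  obtain ⟨k, hk⟩ := H.2
  exact Nat.finite_of_card_ne_zero (hk ▸ pow_ne_zero k (Fact.out : p.Prime).ne_zero)

theorem compactSpace_proPCompletion : CompactSpace (proPCompletion p G) := by
  have := finite_quotient (p := p) (G := G)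
  exact isCompact_iff_compactSpace.1 isClosed_proPCompletion.isCompact

theorem exists_card_quotient_eq_pow_of_index_dvd {H : AddSubgroup G} {n : ℕ}
    (h : H.index ∣ p ^ n) : ∃ k : ℕ, Nat.card (G ⧸ H) = p ^ k := by
  obtain ⟨k, -, hk⟩ := (Nat.dvd_prime_pow (Fact.out : p.Prime)).1 h
  exact ⟨k, hk⟩

theorem directed_pPowerIndexSubgroup :
    Directed (· ≥ ·) fun H : PPowerIndexSubgroup p G => H.1 := fun H H' => by
  obtain ⟨k, hk⟩ := H.2
  obtain ⟨k', hk'⟩ := H'.2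
  have h_dvd : (H.1 ⊓ H'.1).index ∣ p ^ (k + k') := by
    rw [← AddSubgroup.relIndex_mul_index (inf_le_right : H.1 ⊓ H'.1 ≤ H'.1),
      AddSubgroup.inf_relIndex_right, pow_add]
    exact mul_dvd_mul (hk ▸ AddSubgroup.relIndex_dvd_index_of_normal H.1 H'.1) (dvd_of_eq hk')
  exact ⟨⟨H.1 ⊓ H'.1, exists_card_quotient_eq_pow_of_index_dvd h_dvd⟩, inf_le_left, inf_le_right⟩

theorem denseRange_toProPCompletion : DenseRange (toProPCompletion p G) := by
  refine denseRange_of_isInducing_pi (ρ := Subtype.val) IsInducing.subtypeVal fun x I u hu => ?_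
  have : Nonempty (PPowerIndexSubgroup p G) := ⟨⟨⊤, 0, by simp⟩⟩
  obtain ⟨H₀, hH₀⟩ := directed_pPowerIndexSubgroup.finset_le I
  obtain ⟨g, hg⟩ := QuotientAddGroup.mk_surjective (x.1 H₀)
  refine ⟨g, fun H hH => ?_⟩
  have hx : (toProPCompletion p G g).1 H = x.1 H := by
    rw [← x.2 H₀ H (hH₀ H hH), ← hg]
    rfl
  rw [hx]
  exact mem_of_mem_nhds (hu H)

theorem index_ker_toZModPow_comp_dvd (f : G →+ ℤ_[p]) (n : ℕ) :
    ((PadicInt.toZModPow n).toAddMonoidHom.comp f).ker.index ∣ p ^ n := by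
  rw [AddSubgroup.index_ker]
  exact (AddSubgroup.card_addSubgroup_dvd_card _).trans (dvd_of_eq (Nat.card_zmod _))

theorem coe_mem_iInf_principal_pow_dvd (hG : IsSMulRegular G p) (H : PPowerIndexSubgroup p G) :
    (H.1 : Set G) ∈ ⨅ (f : G →+ ℤ_[p]) (n : ℕ), 𝓟 {g | (p : ℤ_[p]) ^ n ∣ f g} := by
  obtain ⟨n, hn⟩ := H.2
  have h_pow : ∀ g : G, p ^ n • g ∈ H.1 := fun g => by
    rw [← QuotientAddGroup.eq_zero_iff, QuotientAddGroup.mk_nsmul, ← hn]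
    exact card_nsmul_eq_zero'
  have h_sep : ∀ c : G ⧸ H.1, ∃ f : G →+ ℤ_[p], ∀ g : G, (g : G ⧸ H.1) = c →
      (p : ℤ_[p]) ^ n ∣ f g → g ∈ H.1 := fun c => by
    obtain ⟨x, rfl⟩ := QuotientAddGroup.mk_surjective c
    by_cases hx : x ∈ H.1
    · exact ⟨0, fun g hg _ => (QuotientAddGroup.eq_zero_iff g).1
        (hg.trans ((QuotientAddGroup.eq_zero_iff x).2 hx))⟩
    · obtain ⟨f, hfH, hfx⟩ := exists_pow_dvd_and_not_pow_dvd_of_notMem hG h_pow hx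
      refine ⟨f, fun g hg hfg => (hfx ?_).elim⟩
      rw [← add_neg_cancel_left g x, map_add]
      exact dvd_add hfg (hfH _ (QuotientAddGroup.eq.1 hg))
  choose f hf using h_sep
  have := finite_quotient H
  refine mem_of_superset (iInter_mem.2 fun c => mem_iInf_of_mem (f c) (mem_iInf_of_mem n
    (mem_principal_self _))) fun g hg => ?_
  exact hf g g rfl (Set.mem_iInter.1 hg g)

theorem comap_toProPCompletion_nhds_zero_eq_comap_eval (hG : IsSMulRegular G p) :
    comap (toProPCompletion p G) (𝓝 0) =
      comap (AddMonoidHom.eval : G →+ (G →+ ℤ_[p]) →+ ℤ_[p]) (𝓝 0) := by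
  rw [comap_toProPCompletion_nhds_zero, comap_eval_nhds_zero]
  refine le_antisymm (le_iInf₂ fun f n => ?_)
    (le_iInf fun H => le_principal_iff.2 (coe_mem_iInf_principal_pow_dvd hG H))
  refine iInf_le_of_le ⟨_, exists_card_quotient_eq_pow_of_index_dvd
    (index_ker_toZModPow_comp_dvd f n)⟩ (principal_mono.2 fun g hg => ?_)
  exact (toZModPow_eq_zero_iff n (f g)).1 hg

theorem stmt17_general (p : ℕ) [Fact p.Prime] (G : Type*) [AddCommGroup G]
    (hG : IsSMulRegular G p) :
    ∃ η : proPCompletion p G ≃ₜ+ ((G →+ ℤ_[p]) →+ ℤ_[p]),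
      ∀ g, η (toProPCompletion p G g) = AddMonoidHom.eval g := by
  have := compactSpace_proPCompletion (p := p) (G := G)
  have := compactSpace_addMonoidHom (G →+ ℤ_[p]) ℤ_[p]
  have := t2Space_addMonoidHom (G →+ ℤ_[p]) ℤ_[p]
  have := isTopologicalAddGroup_addMonoidHom (G →+ ℤ_[p]) ℤ_[p]
  let := IsTopologicalAddGroup.rightUniformSpace (proPCompletion p G)
  let := IsTopologicalAddGroup.rightUniformSpace ((G →+ ℤ_[p]) →+ ℤ_[p])
  have := isUniformAddGroup_of_addCommGroup (G := proPCompletion p G)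
  have := isUniformAddGroup_of_addCommGroup (G := (G →+ ℤ_[p]) →+ ℤ_[p])
  exact exists_continuousAddEquiv_of_comap_nhds_zero_eq _ _ denseRange_toProPCompletion
    denseRange_eval (comap_toProPCompletion_nhds_zero_eq_comap_eval hG)

end ProPCompletion

/-- The `p`-adic double dual of a torsion-free abelian group `G` is, as a
topological group and compatibly with the canonical maps from `G`, the pro-`p`
completion of `G`: the inverse limit of the quotients `G ⧸ H` over subgroups `H`
of `p`-power index. -/
theorem stmt17 (p : ℕ) [Fact p.Prime] (G : Type*) [AddCommGroup G]
    [NoZeroSMulDivisors ℤ G] :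
    ∃ K : AddSubgroup
        (∀ H : {H : AddSubgroup G // ∃ k : ℕ, Nat.card (G ⧸ H) = p ^ k}, G ⧸ H.1),
      -- `K` is the concrete inverse limit of the quotients `G ⧸ H`
      (K : Set (∀ H : {H : AddSubgroup G // ∃ k : ℕ, Nat.card (G ⧸ H) = p ^ k}, G ⧸ H.1)) =
        {x : ∀ H : {H : AddSubgroup G // ∃ k : ℕ, Nat.card (G ⧸ H) = p ^ k}, G ⧸ H.1 |
          ∀ (H H' : {H : AddSubgroup G // ∃ k : ℕ, Nat.card (G ⧸ H) = p ^ k})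
            (hle : H.1 ≤ H'.1),
            QuotientAddGroup.map H.1 H'.1 (AddMonoidHom.id G) (fun _ hg => hle hg) (x H) =
              x H'} ∧
      -- `η` is an additive isomorphism onto the double dual
      ∃ η : K ≃+ ((G →+ ℤ_[p]) →+ ℤ_[p]),
        -- `η` is a homeomorphism for the product-of-discrete topology on `K` and
        -- the relative (pointwise convergence) topology on the double dual
        (letI : ∀ H : {H : AddSubgroup G // ∃ k : ℕ, Nat.card (G ⧸ H) = p ^ k},
            TopologicalSpace (G ⧸ H.1) := fun _ => ⊥
         letI : TopologicalSpace ((G →+ ℤ_[p]) →+ ℤ_[p]) :=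
            TopologicalSpace.induced (fun Φ => (⇑Φ : (G →+ ℤ_[p]) → ℤ_[p])) inferInstance
         Continuous (⇑η) ∧ Continuous (⇑η.symm)) ∧
        -- `η` is compatible with the canonical maps from `G`
        ∀ (g : G)
          (hg : (fun H : {H : AddSubgroup G // ∃ k : ℕ, Nat.card (G ⧸ H) = p ^ k} =>
            (QuotientAddGroup.mk g : G ⧸ H.1)) ∈ K),
          η ⟨_, hg⟩ = AddMonoidHom.mk' (fun f : G →+ ℤ_[p] => f g) (fun _ _ => rfl) := by
  have hG : IsSMulRegular G p := (isSMulRegular_iff_right_eq_zero_of_smul).2 fun g hg => by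
    rw [← natCast_zsmul] at hg
    exact (smul_eq_zero_iff_right (mod_cast (Fact.out : p.Prime).ne_zero)).1 hg
  let := quotientDiscreteTopology p G
  let := pointwiseTopology (G →+ ℤ_[p]) ℤ_[p]
  obtain ⟨η, hη⟩ := stmt17_general p G hG
  exact ⟨proPCompletion p G, rfl, η.toAddEquiv, ⟨η.continuous, η.symm.continuous⟩, fun g _ => hη g⟩
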